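/- Let r ≥ 2 be an integer, let c = 384r, let W ⊆ [n] be a fixed set of at most n/(100r)^4 vertices, and let G ~ G(n,p) where p = p(n) ≫ (log n / n)^{1/2}. Then with high probability, for every r-coloring of the edges of G and every associated majority-color partition W = W_1 ⊎ … ⊎ W_r, each auxiliary graph H_i (for i ∈ [r]) contains 3r − 1 vertex-disjoint cycles covering all but at most 18·r^2·c/p + (3r)^3 vertices of H_i. -/

import Mathlib

open MeasureTheory Filter

noncomputable def bernoulliM (q : ℝ) : Measure Bool :=
  ENNReal.ofReal q • Measure.dirac true + ENNReal.ofReal (1 - q) • Measure.dirac false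

noncomputable def gnp (n : ℕ) (q : ℝ) : Measure (Sym2 (Fin n) → Bool) :=
  Measure.pi fun _ => bernoulliM q

def graphOf {n : ℕ} (ω : Sym2 (Fin n) → Bool) : SimpleGraph (Fin n) :=
  SimpleGraph.fromRel (fun u v => ω s(u, v))

def IsCycleSet {V : Type*} (G : SimpleGraph V) (S : Set V) : Prop :=
  (∃ v, S = {v}) ∨
  (∃ u v, G.Adj u v ∧ S = {u, v}) ∨
  (∃ (v : V) (w : G.Walk v v), w.IsCycle ∧ S = {x | x ∈ w.support})

/-- `N_i(v, U)`: the set of vertices of `U` joined to `v` by an edge of color `i`. -/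
def coloredNbhd {n r : ℕ} (G : SimpleGraph (Fin n)) (c : Sym2 (Fin n) → Fin r) (i : Fin r)
    (v : Fin n) (U : Set (Fin n)) : Set (Fin n) :=
  {u | u ∈ U ∧ G.Adj v u ∧ c s(v, u) = i}

/-- `f` records a majority-color partition of `W`: `v` belongs to the class `f v` only if
color `f v` is (one of) the most common color(s) on edges from `v` to `U = V ∖ W`. -/
def IsMajorityPartition {n r : ℕ} (G : SimpleGraph (Fin n)) (c : Sym2 (Fin n) → Fin r)
    (W : Finset (Fin n)) (f : Fin n → Fin r) : Prop :=
  ∀ v ∈ W, ∀ j : Fin r,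
    (coloredNbhd G c j v ((W : Set (Fin n))ᶜ)).ncard ≤
      (coloredNbhd G c (f v) v ((W : Set (Fin n))ᶜ)).ncard

/-- The auxiliary graph `H_i` on `W_i = {v ∈ W | f v = i}`: two vertices `v, w ∈ W_i` are
adjacent iff `|N_i(v,U) ∩ N_i(w,U)| ≥ thr`, where `U = V ∖ W`. -/
def auxGraph {n r : ℕ} (G : SimpleGraph (Fin n)) (c : Sym2 (Fin n) → Fin r)
    (W : Finset (Fin n)) (f : Fin n → Fin r) (i : Fin r) (thr : ℝ) : SimpleGraph (Fin n) :=
  SimpleGraph.fromRel (fun v w => v ∈ W ∧ w ∈ W ∧ f v = i ∧ f w = i ∧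
    thr ≤ ((coloredNbhd G c i v ((W : Set (Fin n))ᶜ) ∩
            coloredNbhd G c i w ((W : Set (Fin n))ᶜ)).ncard : ℝ))


section PartA
variable {V : Type*}

def IsPth (H : SimpleGraph V) (X : Finset V) (l : List V) : Prop :=
  l.Nodup ∧ l.IsChain H.Adj ∧ ∀ v ∈ l, v ∈ X

lemma IsPth.left {H : SimpleGraph V} {X : Finset V} {a b : List V} (h : IsPth H X (a ++ b)) :
    IsPth H X a := by
  obtain ⟨h1, h2, h3⟩ := h
  exact ⟨(List.nodup_append.1 h1).1, (List.isChain_append.1 h2).1,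
    fun v hv => h3 v (List.mem_append_left _ hv)⟩

lemma IsPth.right {H : SimpleGraph V} {X : Finset V} {a b : List V} (h : IsPth H X (a ++ b)) :
    IsPth H X b := by
  obtain ⟨h1, h2, h3⟩ := h
  exact ⟨(List.nodup_append.1 h1).2.1, (List.isChain_append.1 h2).2.1,
    fun v hv => h3 v (List.mem_append_right _ hv)⟩

lemma IsPth.length_le {H : SimpleGraph V} {X : Finset V} {l : List V} (h : IsPth H X l) :
    l.length ≤ X.card := by
  classical
  rw [← List.toFinset_card_of_nodup h.1]
  apply Finset.card_le_card
  intro v hv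
  exact h.2.2 v (by simpa using hv)

lemma exists_max_len (P : List V → Prop) (B : ℕ) (hB : ∀ R, P R → R.length ≤ B)
    (h : ∃ R, P R) : ∃ R, P R ∧ ∀ R', P R' → R'.length ≤ R.length := by
  classical
  obtain ⟨R0, h0⟩ := h
  have hne : ∃ k, ∃ R, P R ∧ B - R.length = k := ⟨_, R0, h0, rfl⟩
  obtain ⟨R, hR, hk⟩ := Nat.find_spec hne
  refine ⟨R, hR, fun R' hR' => ?_⟩
  have := Nat.find_min' hne ⟨R', hR', rfl⟩
  have := hB R hR
  have := hB R' hR'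
  omega

lemma dfs [DecidableEq V] (H : SimpleGraph V) (X : Finset V) (s : ℕ) (hs : s ≤ X.card) :
    ∃ (P0 R : List V) (S : Finset V), S ⊆ X ∧ S.card = s ∧ R.length ≤ s ∧
      IsPth H X (P0 ++ R) ∧ (∀ v ∈ P0 ++ R, v ∉ S) ∧
      (∀ y ∈ S, ∀ z ∈ X, H.Adj y z → z ∈ S ∨ z ∈ P0 ++ R) ∧
      (∀ y ∈ S, ∃ R', IsPth H X (P0 ++ (R' ++ [y]))) := by
  obtain ⟨L, hL, hmax⟩ := exists_max_len (IsPth H X) X.card (fun R h => h.length_le)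
    ⟨[], by simp [IsPth]⟩
  set P0 := L.take (L.length - s) with hP0
  have hlen : P0.length = L.length - s := by simp [hP0]
  have key : ∀ t ≤ s, ∃ (R : List V) (S : Finset V), S ⊆ X ∧ S.card = t ∧
      L.length ≤ P0.length + R.length + t ∧
      IsPth H X (P0 ++ R) ∧ (∀ v ∈ P0 ++ R, v ∉ S) ∧
      (∀ y ∈ S, ∀ z ∈ X, H.Adj y z → z ∈ S ∨ z ∈ P0 ++ R) ∧
      (∀ y ∈ S, ∃ R', IsPth H X (P0 ++ (R' ++ [y]))) := by
    intro t
    induction t with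
    | zero =>
      intro _
      refine ⟨L.drop (L.length - s), ∅, by simp, by simp, ?_, ?_, by simp, by simp, by simp⟩
      · simp [hP0]
      · simpa [hP0] using hL
    | succ t ih =>
      intro ht
      obtain ⟨R0, S, hSX, hSc, hl, hp, hd, hN, hR'⟩ := ih (by omega)
      obtain ⟨E, ⟨hR, hRd⟩, hRmax⟩ := exists_max_len
        (fun E => IsPth H X (P0 ++ (R0 ++ E)) ∧ ∀ v ∈ P0 ++ (R0 ++ E), v ∉ S) X.card
        (fun R h => h.1.right.right.length_le) ⟨[], by simpa using hp, by simpa using hd⟩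
      have hRne : R0 ++ E ≠ [] := by
        intro hnil
        obtain ⟨h1, h2⟩ := List.append_eq_nil_iff.1 hnil
        subst h1 h2
        simp at hl
        have hP0nil : P0 = [] := by
          rw [← List.length_eq_zero_iff]
          omega
        have : ∃ x ∈ X, x ∉ S := by
          by_contra hcon
          push Not at hcon
          have := Finset.card_le_card (show X ⊆ S from hcon)
          omega
        obtain ⟨x, hx, hxS⟩ := this
        have := hRmax [x] (by simp [hP0nil, IsPth, hx, hxS])
        simp at this
      have hext : ∀ z, ¬ (IsPth H X (P0 ++ ((R0 ++ E) ++ [z])) ∧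
          ∀ v ∈ P0 ++ ((R0 ++ E) ++ [z]), v ∉ S) := by
        intro z hz
        have := hRmax (E ++ [z]) (by simpa using hz)
        simp at this
      have hR0mem : ∀ z ∈ P0 ++ R0, z ∈ P0 ++ (R0 ++ E) := by
        intro z hz
        simp at hz ⊢
        tauto
      have hRR0 : R0.length ≤ (R0 ++ E).length := by simp
      generalize R0 ++ E = R at *
      obtain ⟨R1, y, rfl⟩ : ∃ R1 y, R = R1 ++ [y] := by
        rcases List.eq_nil_or_concat R with h | ⟨a, b, h⟩
        · exact absurd h hRne
        · exact ⟨a, b, by simpa using h⟩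
      have hyS : y ∉ S := hRd y (by simp)
      have hyX : y ∈ X := hR.2.2 y (by simp)
      have hRa : IsPth H X ((P0 ++ R1) ++ [y]) := by simpa using hR
      have hynot : y ∉ P0 ++ R1 := by
        intro hy
        have := List.nodup_append.1 hRa.1
        exact this.2.2 y hy y (by simp) rfl
      refine ⟨R1, insert y S, ?_, ?_, ?_, hRa.left, ?_, ?_, ?_⟩
      · exact Finset.insert_subset hyX hSX
      · rw [Finset.card_insert_of_notMem hyS, hSc]
      · simp at hRR0
        omega
      · intro v hv hvS
        rcases Finset.mem_insert.1 hvS with h | h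
        · exact hynot (h ▸ hv)
        · exact hRd v (by rw [← List.append_assoc]; exact List.mem_append_left _ hv) h
      · intro w hw z hz hwz
        rcases Finset.mem_insert.1 hw with h | h
        · subst h
          by_contra hcon
          push Not at hcon
          obtain ⟨hc1, hc2⟩ := hcon
          have hzS : z ∉ S := fun h => hc1 (Finset.mem_insert_of_mem h)
          have hzw : z ≠ w := fun h => hc1 (h ▸ Finset.mem_insert_self _ _)
          have hnew : IsPth H X (((P0 ++ R1) ++ [w]) ++ [z]) := by
            refine ⟨?_, ?_, ?_⟩
            · refine List.nodup_append.2 ⟨hRa.1, by simp, ?_⟩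
              intro a ha b hb
              simp only [List.mem_singleton] at hb
              subst hb
              rintro rfl
              rcases List.mem_append.1 ha with h | h
              · exact hc2 h
              · exact hzw (by simpa using h)
            · refine List.isChain_append.2 ⟨hRa.2.1, by simp, ?_⟩
              simp
              exact hwz
            · intro v hv
              rcases List.mem_append.1 hv with h | h
              · exact hRa.2.2 v h
              · simp at h
                exact h ▸ hz
          exact hext z ⟨by simpa using hnew, by
            intro v hv
            have : v ∈ P0 ++ (R1 ++ [w]) ∨ v = z := by
              simp at hv ⊢
              tauto
            rcases this with h | h
            · exact hRd v h
            · exact h ▸ hzS⟩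
        · rcases hN w h z hz hwz with h' | h'
          · exact Or.inl (Finset.mem_insert_of_mem h')
          · have h2 := hR0mem z h'
            by_cases hzy : z = y
            · exact Or.inl (hzy ▸ Finset.mem_insert_self _ _)
            · right
              simp at h2 ⊢
              tauto
      · intro w hw
        rcases Finset.mem_insert.1 hw with h | h
        · subst h
          exact ⟨R1, hR⟩
        · exact hR' w h
  obtain ⟨R, S, h1, h2, h3, h4, h5, h6, h7⟩ := key s le_rfl
  refine ⟨P0, R, S, h1, h2, ?_, h4, h5, h6, h7⟩
  have := hmax _ h4
  simp only [List.length_append] at this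
  omega

lemma exists_walk (H : SimpleGraph V) : ∀ (L : List V) (x y : V),
    (x :: (L ++ [y])).IsChain H.Adj → ∃ p : H.Walk x y, p.support = x :: (L ++ [y]) := by
  intro L
  induction L with
  | nil =>
    intro x y h
    have : H.Adj x y := by simpa using h
    exact ⟨SimpleGraph.Walk.cons this SimpleGraph.Walk.nil, by simp⟩
  | cons b L ih =>
    intro x y h
    rw [List.cons_append, List.isChain_cons_cons] at h
    obtain ⟨p, hp⟩ := ih b y h.2
    exact ⟨SimpleGraph.Walk.cons h.1 p, by simp [hp]⟩

lemma cycleSet_of_list (H : SimpleGraph V) (x : V) (L : List V) (y : V)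
    (hn : (x :: (L ++ [y])).Nodup) (hc : (x :: (L ++ [y])).IsChain H.Adj) (hxy : H.Adj y x) :
    IsCycleSet H {v | v ∈ x :: (L ++ [y])} := by
  right
  rcases L with _ | ⟨b, L⟩
  · left
    refine ⟨x, y, hxy.symm, ?_⟩
    ext v
    simp
  · right
    obtain ⟨p, hs⟩ := exists_walk H (b :: L) x y hc
    refine ⟨y, SimpleGraph.Walk.cons hxy p, ?_, ?_⟩
    · rw [SimpleGraph.Walk.cons_isCycle_iff]
      have hpp : p.IsPath := by
        rw [SimpleGraph.Walk.isPath_def, hs]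
        exact hn
      refine ⟨hpp, fun he => ?_⟩
      have h1 := hpp.length_eq_one_of_mem_edges (by rwa [Sym2.eq_swap])
      have h2 := SimpleGraph.Walk.length_support p
      rw [hs, h1] at h2
      simp at h2
    · ext v
      rw [SimpleGraph.Walk.support_cons, hs]
      simp
      tauto

def QProp (H : SimpleGraph V) (s k : ℕ) (X : Finset V) : Prop :=
  ∀ A : Fin (k + 1) → Finset V, (∀ i, A i ⊆ X) → (∀ i, (A i).card = s) →
    (∀ i j, i ≠ j → Disjoint (A i) (A j)) →
    ∃ i j, i ≠ j ∧ ∃ a ∈ A i, ∃ b ∈ A j, H.Adj a b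

lemma QProp.step {H : SimpleGraph V} {s k : ℕ} {X X' S : Finset V} (h : QProp H s (k + 1) X)
    (hX' : X' ⊆ X) (hS : S ⊆ X) (hc : S.card = s) (hd : Disjoint S X')
    (hN : ∀ y ∈ S, ∀ z ∈ X', ¬ H.Adj y z) : QProp H s k X' := by
  intro A hA hAc hAd
  obtain ⟨i, j, hij, a, ha, b, hb, hab⟩ := h (Fin.cons S A)
    (fun i => by
      refine Fin.cases ?_ (fun i => ?_) i
      · simpa using hS
      · simpa using (hA i).trans hX')
    (fun i => by
      refine Fin.cases ?_ (fun i => ?_) i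
      · simpa using hc
      · simpa using hAc i)
    (fun i j => by
      refine Fin.cases ?_ (fun i => ?_) i
      · refine Fin.cases ?_ (fun j => ?_) j
        · simp
        · intro _
          simpa using Finset.disjoint_of_subset_right (hA j) hd
      · refine Fin.cases ?_ (fun j => ?_) j
        · intro _
          simpa using (Finset.disjoint_of_subset_right (hA i) hd).symm
        · intro hij
          simpa using hAd i j (fun h => hij (by rw [h])))
  induction i using Fin.cases with
  | zero =>
    induction j using Fin.cases with
    | zero => exact absurd rfl hij
    | succ j =>
      simp at ha hb
      exact absurd hab (hN a ha b (hA j hb))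
  | succ i =>
    induction j using Fin.cases with
    | zero =>
      simp at ha hb
      exact absurd hab.symm (hN b hb a (hA i ha))
    | succ j =>
      simp at ha hb
      exact ⟨i, j, fun h => hij (by rw [h]), a, ha, b, hb, hab⟩

lemma cover [DecidableEq V] (H : SimpleGraph V) (s : ℕ) : ∀ (k : ℕ) (X : Finset V),
    QProp H s k X →
    ∃ (C : Finset (Set V)) (L : Finset V), C.card ≤ k ∧ (C : Set (Set V)).Pairwise Disjoint ∧
      (∀ S ∈ C, IsCycleSet H S ∧ S ⊆ (X : Set V)) ∧ L.card ≤ (2 * k + 1) * s ∧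
      ∀ v ∈ X, v ∈ L ∨ ∃ S ∈ C, v ∈ S := by
  classical
  intro k
  induction k with
  | zero =>
    intro X hQ
    refine ⟨∅, X, by simp, by simp, by simp, ?_, fun v hv => Or.inl hv⟩
    by_contra hcon
    obtain ⟨A, hA, hAc⟩ := Finset.exists_subset_card_eq (show s ≤ X.card by omega)
    obtain ⟨i, j, hij, -⟩ := hQ (fun _ => A) (fun _ => hA) (fun _ => hAc)
      (fun i j hij => absurd (Subsingleton.elim (α := Fin 1) i j) hij)
    exact hij (Subsingleton.elim (α := Fin 1) i j)
  | succ k ih =>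
    intro X hQ
    by_cases hXs : X.card < s
    · refine ⟨∅, X, by simp, by simp, by simp, ?_, fun v hv => Or.inl hv⟩
      nlinarith
    · obtain ⟨P0, R, S, hSX, hSc, hRl, hp, hd, hN, hR'⟩ := dfs H X s (by omega)
      have hRc : R.toFinset.card ≤ s := (List.toFinset_card_le _).trans hRl
      have hSRc : (S ∪ R.toFinset).card ≤ 2 * s := by
        have := Finset.card_union_le S R.toFinset
        omega
      by_cases hex : ∃ x ∈ P0, ∃ y ∈ S, H.Adj y x
      · -- first vertex
        obtain ⟨A, x, B, y, rfl, hyS, hyx, hA⟩ : ∃ A x B y, P0 = A ++ x :: B ∧ y ∈ S ∧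
            H.Adj y x ∧ ∀ a ∈ A, ∀ y ∈ S, ¬ H.Adj y a := by
          clear hp hd hN hR'
          induction P0 with
          | nil => simp at hex
          | cons w P0 ihP =>
            by_cases hw : ∃ y ∈ S, H.Adj y w
            · obtain ⟨y, hy, hyw⟩ := hw
              exact ⟨[], w, P0, y, rfl, hy, hyw, by simp⟩
            · have : ∃ x ∈ P0, ∃ y ∈ S, H.Adj y x := by
                obtain ⟨x, hx, y, hy, hyx⟩ := hex
                rcases List.mem_cons.1 hx with h | h
                · exact absurd ⟨y, hy, h ▸ hyx⟩ hw
                · exact ⟨x, h, y, hy, hyx⟩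
              obtain ⟨A, x, B, y, h1, h2, h3, h4⟩ := ihP this
              refine ⟨w :: A, x, B, y, by simp [h1], h2, h3, ?_⟩
              intro a ha
              rcases List.mem_cons.1 ha with h | h
              · subst h
                push Not at hw
                exact hw
              · exact h4 a h
        obtain ⟨R', hR'⟩ := hR' y hyS
        have hcyc : IsPth H X (x :: ((B ++ R') ++ [y])) := by
          have : IsPth H X (A ++ (x :: ((B ++ R') ++ [y]))) := by simpa using hR'
          exact this.right
        have hCS := cycleSet_of_list H x (B ++ R') y hcyc.1 hcyc.2.1 hyx
        set Cl := x :: ((B ++ R') ++ [y]) with hCl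
        set X' := X \ (S ∪ R.toFinset ∪ Cl.toFinset) with hX'
        have hX'X : X' ⊆ X := Finset.sdiff_subset
        have hmem : ∀ z, z ∈ X' ↔ z ∈ X ∧ z ∉ S ∧ z ∉ R ∧ z ∉ Cl := by
          intro z
          simp only [hX', Finset.mem_sdiff, Finset.mem_union, List.mem_toFinset]
          tauto
        have hQ' : QProp H s k X' := by
          refine hQ.step hX'X hSX hSc ?_ ?_
          · rw [Finset.disjoint_right]
            intro z hz
            exact ((hmem z).1 hz).2.1
          · intro w hw z hz hwz
            obtain ⟨h1, h2, h3, h4⟩ := (hmem z).1 hz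
            rcases hN w hw z h1 hwz with h | h
            · exact h2 h
            · have hzA : z ∈ A := by
                simp [hCl] at h h4
                tauto
              exact hA z hzA w hw hwz
        obtain ⟨C, L, hCc, hCd, hCS', hLc, hcov⟩ := ih X' hQ'
        refine ⟨insert {v | v ∈ Cl} C, L ∪ (S ∪ R.toFinset), ?_, ?_, ?_, ?_, ?_⟩
        · exact (Finset.card_insert_le _ _).trans (by omega)
        · rw [Finset.coe_insert]
          refine hCd.insert_of_symm ?_
          intro T hT _
          rw [Set.disjoint_right]
          intro z hz hz2
          exact ((hmem z).1 ((hCS' T hT).2 hz)).2.2.2 hz2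
        · intro T hT
          rcases Finset.mem_insert.1 hT with h | h
          · subst h
            exact ⟨hCS, fun v hv => hcyc.2.2 v hv⟩
          · exact ⟨(hCS' T h).1, (hCS' T h).2.trans (by exact_mod_cast hX'X)⟩
        · have := Finset.card_union_le L (S ∪ R.toFinset)
          nlinarith
        · intro v hv
          by_cases hvX' : v ∈ X'
          · rcases hcov v hvX' with h | ⟨T, hT, hvT⟩
            · exact Or.inl (Finset.mem_union_left _ h)
            · exact Or.inr ⟨T, Finset.mem_insert_of_mem hT, hvT⟩
          · by_cases hvC : v ∈ Cl
            · exact Or.inr ⟨_, Finset.mem_insert_self _ _, hvC⟩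
            · left
              rw [hmem] at hvX'
              simp only [Finset.mem_union, List.mem_toFinset]
              tauto
      · push Not at hex
        set X' := X \ (S ∪ R.toFinset) with hX'
        have hX'X : X' ⊆ X := Finset.sdiff_subset
        have hmem : ∀ z, z ∈ X' ↔ z ∈ X ∧ z ∉ S ∧ z ∉ R := by
          intro z
          simp only [hX', Finset.mem_sdiff, Finset.mem_union, List.mem_toFinset]
          tauto
        have hQ' : QProp H s k X' := by
          refine hQ.step hX'X hSX hSc ?_ ?_
          · rw [Finset.disjoint_right]
            intro z hz
            exact ((hmem z).1 hz).2.1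
          · intro w hw z hz hwz
            obtain ⟨h1, h2, h3⟩ := (hmem z).1 hz
            rcases hN w hw z h1 hwz with h | h
            · exact h2 h
            · rcases List.mem_append.1 h with h | h
              · exact hex z h w hw hwz
              · exact h3 h
        obtain ⟨C, L, hCc, hCd, hCS', hLc, hcov⟩ := ih X' hQ'
        refine ⟨C, L ∪ (S ∪ R.toFinset), by omega, hCd, ?_, ?_, ?_⟩
        · intro T h
          exact ⟨(hCS' T h).1, (hCS' T h).2.trans (by exact_mod_cast hX'X)⟩
        · have := Finset.card_union_le L (S ∪ R.toFinset)
          nlinarith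
        · intro v hv
          by_cases hvX' : v ∈ X'
          · rcases hcov v hvX' with h | h
            · exact Or.inl (Finset.mem_union_left _ h)
            · exact Or.inr h
          · left
            rw [hmem] at hvX'
            simp only [Finset.mem_union, List.mem_toFinset]
            tauto
end PartA

section PartB

lemma bern_prob {q : ℝ} (h0 : 0 ≤ q) (h1 : q ≤ 1) : IsProbabilityMeasure (bernoulliM q) := by
  constructor
  simp only [bernoulliM, Measure.add_apply, Measure.smul_apply, measure_univ, smul_eq_mul, mul_one]
  rw [← ENNReal.ofReal_add h0 (by linarith)]
  simp

lemma gnp_prob {n : ℕ} {q : ℝ} (h0 : 0 ≤ q) (h1 : q ≤ 1) : IsProbabilityMeasure (gnp n q) := by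
  have := bern_prob h0 h1
  unfold gnp
  infer_instance

noncomputable def bv (b : Bool) : ℝ := if b then 1 else 0

lemma integral_bv {q : ℝ} (h0 : 0 ≤ q) (h1 : q ≤ 1) : ∫ b, bv b ∂(bernoulliM q) = q := by
  have i1 : IsFiniteMeasure (ENNReal.ofReal q • Measure.dirac true) :=
    Measure.smul_finite _ ENNReal.ofReal_ne_top
  have i2 : IsFiniteMeasure (ENNReal.ofReal (1 - q) • Measure.dirac false) :=
    Measure.smul_finite _ ENNReal.ofReal_ne_top
  unfold bernoulliM
  rw [integral_add_measure (Integrable.of_finite) (Integrable.of_finite), integral_smul_measure, integral_smul_measure,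
    integral_dirac, integral_dirac]
  simp [bv, h0]

lemma integral_prod_bv {n : ℕ} {q : ℝ} (h0 : 0 ≤ q) (h1 : q ≤ 1) (F : Finset (Sym2 (Fin n))) :
    ∫ ω, ∏ e ∈ F, bv (ω e) ∂(gnp n q) = q ^ F.card := by
  have := bern_prob h0 h1
  have h : ∀ ω : Sym2 (Fin n) → Bool, ∏ e ∈ F, bv (ω e) =
      ∏ e, (if e ∈ F then bv else fun _ => 1) (ω e) := by
    intro ω
    rw [← Finset.prod_filter_mul_prod_filter_not Finset.univ (· ∈ F)]
    rw [show Finset.univ.filter (· ∈ F) = F by ext; simp]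
    rw [Finset.prod_eq_one (s := Finset.univ.filter (¬ · ∈ F))]
    · rw [mul_one]
      exact Finset.prod_congr rfl (fun x hx => by rw [if_pos hx])
    · intro x hx
      simp at hx
      rw [if_neg hx]
  simp_rw [h]
  unfold gnp
  rw [integral_fintype_prod_eq_prod]
  have h2 : ∀ e, ∫ x, (if e ∈ F then bv else fun _ => 1) x ∂(bernoulliM q) =
      if e ∈ F then q else 1 := by
    intro e
    split_ifs
    · exact integral_bv h0 h1
    · rw [integral_const]
      simp only [probReal_univ, smul_eq_mul, mul_one]
  simp_rw [h2]
  simp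

lemma integral_exp_sum {n : ℕ} {q : ℝ} (h0 : 0 ≤ q) (h1 : q ≤ 1) {ι : Type*} [DecidableEq ι] (U : Finset ι)
    (S : ι → Finset (Sym2 (Fin n))) (hS : (U : Set ι).PairwiseDisjoint S) (k : ℕ)
    (hk : ∀ u ∈ U, (S u).card = k) (lam : ℝ) :
    ∫ ω, Real.exp (lam * ∑ u ∈ U, ∏ e ∈ S u, bv (ω e)) ∂(gnp n q) =
      (1 + (Real.exp lam - 1) * q ^ k) ^ U.card := by
  have := gnp_prob (n := n) h0 h1
  have h : ∀ ω : Sym2 (Fin n) → Bool, Real.exp (lam * ∑ u ∈ U, ∏ e ∈ S u, bv (ω e)) =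
      ∑ T ∈ U.powerset, (Real.exp lam - 1) ^ T.card * ∏ e ∈ T.biUnion S, bv (ω e) := by
    intro ω
    rw [Finset.mul_sum, Real.exp_sum]
    have h01 : ∀ u, ∏ e ∈ S u, bv (ω e) = 0 ∨ ∏ e ∈ S u, bv (ω e) = 1 := by
      intro u
      by_cases hu : ∀ e ∈ S u, ω e = true
      · right
        apply Finset.prod_eq_one
        intro e he
        simp [bv, hu e he]
      · left
        push Not at hu
        obtain ⟨e, he, h⟩ := hu
        exact Finset.prod_eq_zero he (by simp [bv, h])
    have h2 : ∀ u ∈ U, Real.exp (lam * ∏ e ∈ S u, bv (ω e)) =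
        1 + (Real.exp lam - 1) * ∏ e ∈ S u, bv (ω e) := by
      intro u _
      rcases h01 u with h | h <;> rw [h] <;> simp
    rw [Finset.prod_congr rfl h2, Finset.prod_one_add]
    apply Finset.sum_congr rfl
    intro T hT
    rw [Finset.prod_mul_distrib, Finset.prod_const, Finset.prod_biUnion]
    exact hS.subset (by exact_mod_cast Finset.mem_powerset.1 hT)
  simp_rw [h]
  rw [integral_finset_sum _ (fun _ _ => Integrable.of_finite)]
  simp_rw [integral_const_mul, integral_prod_bv h0 h1]
  have h3 : ∀ T ∈ U.powerset, (Real.exp lam - 1) ^ T.card * q ^ (T.biUnion S).card =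
      ∏ u ∈ T, ((Real.exp lam - 1) * q ^ k) := by
    intro T hT
    have hTU := Finset.mem_powerset.1 hT
    rw [Finset.card_biUnion (fun x hx y hy hxy => hS (hTU hx) (hTU hy) hxy),
      Finset.sum_congr rfl (fun u hu => hk u (hTU hu))]
    simp [mul_pow, ← pow_mul, mul_comm]
  rw [Finset.sum_congr rfl h3, ← Finset.prod_one_add]
  simp

lemma integral_exp_le {n : ℕ} {q : ℝ} (h0 : 0 ≤ q) (h1 : q ≤ 1) {ι : Type*} [DecidableEq ι] (U : Finset ι)
    (S : ι → Finset (Sym2 (Fin n))) (hS : (U : Set ι).PairwiseDisjoint S) (k : ℕ)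
    (hk : ∀ u ∈ U, (S u).card = k) (lam : ℝ) (hl : |lam| ≤ 1) :
    ∫ ω, Real.exp (lam * ∑ u ∈ U, ∏ e ∈ S u, bv (ω e)) ∂(gnp n q) ≤
      Real.exp (U.card * q ^ k * (lam + lam ^ 2)) := by
  rw [integral_exp_sum h0 h1 U S hS k hk lam]
  have hq : 0 ≤ q ^ k := pow_nonneg h0 k
  have hq1 : q ^ k ≤ 1 := pow_le_one₀ h0 h1
  have hb := (abs_le.1 (Real.abs_exp_sub_one_sub_id_le hl)).2
  have hpos := Real.exp_pos lam
  have h2 : 1 + (Real.exp lam - 1) * q ^ k ≤ Real.exp (q ^ k * (lam + lam ^ 2)) := by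
    have := Real.add_one_le_exp (q ^ k * (lam + lam ^ 2))
    nlinarith
  have h3 : 0 ≤ 1 + (Real.exp lam - 1) * q ^ k := by nlinarith
  calc _ ≤ (Real.exp (q ^ k * (lam + lam ^ 2))) ^ U.card := by gcongr
    _ = _ := by rw [← Real.exp_nat_mul]; ring_nf

/-- Markov / Chernoff, for either sign of `lam`. -/
lemma chernoff {n : ℕ} {q : ℝ} (h0 : 0 ≤ q) (h1 : q ≤ 1) {ι : Type*} [DecidableEq ι] (U : Finset ι)
    (S : ι → Finset (Sym2 (Fin n))) (hS : (U : Set ι).PairwiseDisjoint S) (k : ℕ)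
    (hk : ∀ u ∈ U, (S u).card = k) (lam : ℝ) (hl : |lam| ≤ 1) (a : ℝ) :
    (gnp n q).real {ω | lam * a ≤ lam * ∑ u ∈ U, ∏ e ∈ S u, bv (ω e)} ≤
      Real.exp (- lam * a + U.card * q ^ k * (lam + lam ^ 2)) := by
  have := gnp_prob (n := n) h0 h1
  have hm := ProbabilityTheory.measure_ge_le_exp_mul_mgf (μ := gnp n q) (t := 1)
    (X := fun ω => lam * ∑ u ∈ U, ∏ e ∈ S u, bv (ω e)) (lam * a) zero_le_one
    (Integrable.of_finite)
  refine hm.trans ?_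
  rw [Real.exp_add]
  have := integral_exp_le h0 h1 U S hS k hk lam hl
  simp only [ProbabilityTheory.mgf, one_mul]
  rw [show -1 * (lam * a) = -lam * a by ring]
  gcongr

end PartB

section PartC

lemma counting {V α : Type*} [DecidableEq V] (r s : ℕ) (hr : 2 ≤ r) (n p del t : ℝ) (hn : 0 < n)
    (hp : 0 < p) (hdel : del = 1 / (20 * r)) (ht : t = s * p) (ht2 : 384 * r ≤ t)
    (U : Finset α) (hU : (U.card : ℝ) ≤ n) (g h : V → α → ℝ)
    (hh0 : ∀ a u, 0 ≤ h a u) (hhg : ∀ a u, h a u ≤ g a u)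
    (A : Fin (3 * r) → Finset V) (hA : ∀ i, (A i).card = s)
    (hdeg : ∀ i, ∀ a ∈ A i, (1 - del) * n * p ≤ ∑ u ∈ U, g a u)
    (hcod : ∀ i, ∀ a ∈ A i, ∀ b ∈ A i, ∑ u ∈ U, g a u * g b u ≤
      (1 + del) * n * (if a = b then p else p ^ 2))
    (hcol : ∀ i, ∀ a ∈ A i, ∑ u ∈ U, g a u ≤ r * ∑ u ∈ U, h a u)
    (hne : ∀ i j, i ≠ j → ∀ a ∈ A i, ∀ b ∈ A j,
      ∑ u ∈ U, h a u * h b u ≤ n * p ^ 2 / (50 * r) ^ 4) : False := by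
  have hrr : (2 : ℝ) ≤ r := by exact_mod_cast hr
  have hr0 : (0 : ℝ) < r := by linarith
  have hdr : del * r = 1 / 20 := by rw [hdel]; field_simp
  have hd0 : 0 < del := by rw [hdel]; positivity
  have hd1 : del ≤ 1 / 40 := by nlinarith
  have ht0 : 0 < t := by nlinarith
  set d : Fin (3 * r) → α → ℝ := fun j u => ∑ a ∈ A j, g a u with hd
  set x : Fin (3 * r) → α → ℝ := fun j u => ∑ a ∈ A j, h a u with hx
  have hx0 : ∀ j u, 0 ≤ x j u := fun j u => Finset.sum_nonneg fun a _ => hh0 a u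
  have hxd : ∀ j u, x j u ≤ d j u := fun j u => Finset.sum_le_sum fun a _ => hhg a u
  have e1 : ∀ j, ∑ u ∈ U, d j u ^ 2 ≤ (1 + del) * n * t + (1 + del) * n * t ^ 2 := by
    intro j
    have : ∑ u ∈ U, d j u ^ 2 = ∑ a ∈ A j, ∑ b ∈ A j, ∑ u ∈ U, g a u * g b u := by
      simp_rw [hd, sq, Finset.sum_mul_sum]
      rw [Finset.sum_comm]
      refine Finset.sum_congr rfl fun a _ => ?_
      rw [Finset.sum_comm]
    rw [this]
    calc _ ≤ ∑ a ∈ A j, ∑ b ∈ A j, (1 + del) * n * ((if a = b then p else 0) + p ^ 2) := by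
          refine Finset.sum_le_sum fun a ha => Finset.sum_le_sum fun b hb => ?_
          refine (hcod j a ha b hb).trans ?_
          gcongr
          split_ifs
          · nlinarith [sq_nonneg p]
          · simp
      _ = (1 + del) * n * t + (1 + del) * n * t ^ 2 := by
          simp_rw [← Finset.mul_sum, Finset.sum_add_distrib]
          rw [Finset.sum_congr rfl (fun a ha => by rw [Finset.sum_ite_eq, if_pos ha])]
          simp [hA, ht]
          ring
  have e2 : ∀ j, (1 - del) * n * t ≤ ∑ u ∈ U, d j u := by
    intro j
    simp_rw [hd]
    rw [Finset.sum_comm]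
    calc _ = ∑ a ∈ A j, (1 - del) * n * p := by simp [hA, ht]; ring
      _ ≤ _ := Finset.sum_le_sum fun a ha => hdeg j a ha
  have e3 : ∀ j, ∑ u ∈ U, (d j u - t) ^ 2 ≤ n * t ^ 2 / (5 * r) := by
    intro j
    have : ∑ u ∈ U, (d j u - t) ^ 2 =
        ∑ u ∈ U, d j u ^ 2 - 2 * t * ∑ u ∈ U, d j u + U.card * t ^ 2 := by
      rw [Finset.mul_sum, ← Finset.sum_sub_distrib, ← nsmul_eq_mul, ← Finset.sum_const,
        ← Finset.sum_add_distrib]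
      exact Finset.sum_congr rfl fun u _ => by ring
    rw [this]
    have h1 := e1 j
    have h2 := mul_le_mul_of_nonneg_left (e2 j) (show 0 ≤ 2 * t by positivity)
    have h3 := mul_le_mul_of_nonneg_right hU (sq_nonneg t)
    have h4 : n * t * (384 * r) ≤ n * t * t := by gcongr
    have h5 : n * t * 384 ≤ n * t ^ 2 / r := by
      rw [le_div_iff₀ hr0]; nlinarith
    have h6 : n * t ^ 2 / (5 * r) = (1 / 5) * (n * t ^ 2 / r) := by field_simp
    have h7 : del * (n * t ^ 2) = (1 / 20) * (n * t ^ 2 / r) := by rw [hdel]; field_simp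
    have h8 : del * (n * t) ≤ 1 / 40 * (n * t) := by gcongr
    rw [h6]
    have : 0 < n * t := by positivity
    nlinarith
  have e4 : ∀ j, ∑ u ∈ U, x j u ^ 2 ≤ 4 / 3 * (t * ∑ u ∈ U, x j u + n * t ^ 2 / (5 * r)) := by
    intro j
    have : 3 / 4 * ∑ u ∈ U, x j u ^ 2 ≤ t * ∑ u ∈ U, x j u + ∑ u ∈ U, (d j u - t) ^ 2 := by
      rw [Finset.mul_sum, Finset.mul_sum, ← Finset.sum_add_distrib]
      refine Finset.sum_le_sum fun u _ => ?_
      nlinarith [mul_le_mul_of_nonneg_left (hxd j u) (hx0 j u),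
        sq_nonneg (x j u / 2 - (d j u - t))]
    linarith [e3 j]
  have e5 : ∀ j, (1 - del) * n * t / r ≤ ∑ u ∈ U, x j u := by
    intro j
    rw [div_le_iff₀ hr0]
    refine (e2 j).trans ?_
    simp_rw [hd, hx]
    rw [Finset.sum_comm, Finset.sum_comm (s := U), mul_comm, Finset.mul_sum]
    exact Finset.sum_le_sum fun a ha => hcol j a ha
  set M := ∑ j, ∑ u ∈ U, x j u with hM
  have e6 : 29 / 10 * (n * t) ≤ M := by
    calc _ ≤ ∑ j : Fin (3 * r), (1 - del) * n * t / r := by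
          simp
          rw [show 3 * (r : ℝ) * ((1 - del) * n * t / r) = 3 * (1 - del) * (n * t) by field_simp]
          gcongr
          linarith
      _ ≤ _ := Finset.sum_le_sum fun j _ => e5 j
  have e7 : M ^ 2 ≤ n * ∑ u ∈ U, (∑ j, x j u) ^ 2 := by
    rw [hM, Finset.sum_comm]
    refine (sq_sum_le_card_mul_sum_sq).trans ?_
    gcongr
  have ec : ∀ j k, j ≠ k → ∑ u ∈ U, x j u * x k u ≤ n * t ^ 2 / (50 * r) ^ 4 := by
    intro j k hjk
    have : ∑ u ∈ U, x j u * x k u = ∑ a ∈ A j, ∑ b ∈ A k, ∑ u ∈ U, h a u * h b u := by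
      simp_rw [hx, Finset.sum_mul_sum]
      rw [Finset.sum_comm]
      refine Finset.sum_congr rfl fun a _ => ?_
      rw [Finset.sum_comm]
    rw [this]
    calc _ ≤ ∑ a ∈ A j, ∑ b ∈ A k, n * p ^ 2 / (50 * r) ^ 4 :=
          Finset.sum_le_sum fun a ha => Finset.sum_le_sum fun b hb => hne j k hjk a ha b hb
      _ = _ := by simp [hA, ht]; ring
  have e8 : ∑ u ∈ U, (∑ j, x j u) ^ 2 ≤ 4 / 3 * t * M + n * t ^ 2 := by
    have : ∑ u ∈ U, (∑ j, x j u) ^ 2 = ∑ j, ∑ k, ∑ u ∈ U, x j u * x k u := by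
      simp_rw [sq, Finset.sum_mul_sum]
      rw [Finset.sum_comm]
      refine Finset.sum_congr rfl fun a _ => ?_
      rw [Finset.sum_comm]
    rw [this]
    calc _ ≤ ∑ j : Fin (3 * r), ∑ k : Fin (3 * r),
          ((if j = k then 4 / 3 * (t * ∑ u ∈ U, x j u + n * t ^ 2 / (5 * r)) else 0)
            + n * t ^ 2 / (50 * r) ^ 4) := by
          refine Finset.sum_le_sum fun j _ => Finset.sum_le_sum fun k _ => ?_
          split_ifs with hjk
          · subst hjk
            have := e4 j
            simp_rw [← sq]
            have : 0 ≤ n * t ^ 2 / (50 * r) ^ 4 := by positivity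
            linarith
          · linarith [ec j k hjk]
      _ = 4 / 3 * t * M + 4 / 5 * (n * t ^ 2) + (3 * r) ^ 2 * (n * t ^ 2 / (50 * r) ^ 4) := by
          simp_rw [Finset.sum_add_distrib, Finset.sum_ite_eq]
          simp [← Finset.mul_sum, Finset.sum_add_distrib]
          rw [← hM]
          field_simp
      _ ≤ _ := by
          have : (3 * (r : ℝ)) ^ 2 * (n * t ^ 2 / (50 * r) ^ 4) ≤ 1 / 5 * (n * t ^ 2) := by
            rw [mul_div_assoc', div_le_iff₀ (by positivity)]
            have h1 : (3 * (r : ℝ)) ^ 2 ≤ 1 / 5 * (50 * r) ^ 4 := by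
              have : (1 : ℝ) ≤ r ^ 2 := by nlinarith
              nlinarith
            nlinarith [mul_le_mul_of_nonneg_right h1 (show 0 ≤ n * t ^ 2 by positivity)]
          linarith
  have e9 : M ^ 2 ≤ n * (4 / 3 * t * M + n * t ^ 2) := e7.trans (by gcongr)
  have : 0 < n * t := by positivity
  nlinarith [mul_le_mul e6 e6 (by positivity) (by linarith)]

lemma graphOf_adj {n : ℕ} (ω : Sym2 (Fin n) → Bool) (a u : Fin n) :
    (graphOf ω).Adj a u ↔ a ≠ u ∧ ω s(a, u) = true := by
  unfold graphOf
  rw [SimpleGraph.fromRel_adj, Sym2.eq_swap (a := u)]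
  simp

def Good {n : ℕ} (W : Finset (Fin n)) (p del : ℝ) (ω : Sym2 (Fin n) → Bool) : Prop :=
  (∀ a ∈ W, (1 - del) * n * p ≤ ∑ u ∈ Wᶜ, bv (ω s(a, u))) ∧
  (∀ a ∈ W, ∀ b ∈ W, ∑ u ∈ Wᶜ, bv (ω s(a, u)) * bv (ω s(b, u)) ≤
      (1 + del) * n * (if a = b then p else p ^ 2))

lemma good_qprop {n r : ℕ} (hr : 2 ≤ r) (hn : 0 < n) (W : Finset (Fin n)) (p del : ℝ)
    (hp : 0 < p) (hdel : del = 1 / (20 * r)) (ω : Sym2 (Fin n) → Bool) (hG : Good W p del ω)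
    (s : ℕ) (hs : 384 * (r : ℝ) ≤ s * p)
    (col : Sym2 (Fin n) → Fin r) (f : Fin n → Fin r)
    (hf : IsMajorityPartition (graphOf ω) col W f) (i : Fin r) (k : ℕ) (hk : k + 1 = 3 * r) :
    QProp (auxGraph (graphOf ω) col W f i ((n : ℝ) * p ^ 2 / (50 * r : ℝ) ^ 4)) s k
      (W.filter (fun v => f v = i)) := by
  classical
  unfold QProp
  rw [hk]
  intro A hAX hA hAd
  by_contra hcon
  push Not at hcon
  have hmem : ∀ j, ∀ a ∈ A j, a ∈ W ∧ f a = i := fun j a ha => by simpa using hAX j ha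
  have hncard : ∀ a ∈ W, ∀ j : Fin r,
      ((coloredNbhd (graphOf ω) col j a ((W : Set (Fin n))ᶜ)).ncard : ℝ) =
      ∑ u ∈ Wᶜ, if ω s(a, u) = true ∧ col s(a, u) = j then (1 : ℝ) else 0 := by
    intro a ha j
    rw [Finset.sum_boole, ← Set.ncard_coe_finset]
    congr 2
    ext u
    simp only [coloredNbhd, graphOf_adj, Finset.coe_filter, Finset.mem_compl, Set.mem_setOf_eq,
      Set.mem_compl_iff, Finset.mem_coe]
    constructor
    · tauto
    · rintro ⟨h1, h2, h3⟩
      exact ⟨h1, ⟨fun h => h1 (h ▸ ha), h2⟩, h3⟩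
  refine counting r s hr (n : ℝ) p del (s * p) (by exact_mod_cast hn) hp hdel rfl hs Wᶜ
    ?_ (fun a u => bv (ω s(a, u)))
    (fun a u => if ω s(a, u) = true ∧ col s(a, u) = i then (1 : ℝ) else 0) ?_ ?_ A hA ?_ ?_ ?_ ?_
  · have := Finset.card_le_univ Wᶜ
    simp only [Fintype.card_fin] at this
    exact_mod_cast this
  · intro a u
    split_ifs <;> norm_num
  · intro a u
    dsimp only [bv]
    split_ifs <;> simp_all
  · intro j a ha
    exact hG.1 a (hmem j a ha).1
  · intro j a ha b hb
    exact hG.2 a (hmem j a ha).1 b (hmem j b hb).1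
  · intro j a ha
    obtain ⟨haW, hfa⟩ := hmem j a ha
    rw [← hncard a haW i]
    calc ∑ u ∈ Wᶜ, bv (ω s(a, u)) =
        ∑ u ∈ Wᶜ, ∑ j : Fin r, (if ω s(a, u) = true ∧ col s(a, u) = j then (1 : ℝ) else 0) := by
          refine Finset.sum_congr rfl fun u _ => ?_
          by_cases h : ω s(a, u) = true <;> simp [bv, h]
      _ = ∑ j : Fin r, ((coloredNbhd (graphOf ω) col j a ((W : Set (Fin n))ᶜ)).ncard : ℝ) := by
          rw [Finset.sum_comm]
          exact Finset.sum_congr rfl fun j _ => (hncard a haW j).symm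
      _ ≤ ∑ j : Fin r, ((coloredNbhd (graphOf ω) col i a ((W : Set (Fin n))ᶜ)).ncard : ℝ) := by
          refine Finset.sum_le_sum fun j _ => ?_
          have := hf a haW j
          rw [hfa] at this
          exact_mod_cast this
      _ = _ := by simp
  · intro j k hjk a ha b hb
    obtain ⟨haW, hfa⟩ := hmem j a ha
    obtain ⟨hbW, hfb⟩ := hmem k b hb
    have hab : a ≠ b := fun h => Finset.disjoint_left.1 (hAd j k hjk) ha (h ▸ hb)
    have h1 := hcon j k hjk a ha b hb
    by_contra h2
    push Not at h2
    apply h1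
    unfold auxGraph
    rw [SimpleGraph.fromRel_adj]
    refine ⟨hab, Or.inl ⟨haW, hbW, hfa, hfb, h2.le.trans (le_of_eq ?_)⟩⟩
    have h3 : ∀ u, (if ω s(a, u) = true ∧ col s(a, u) = i then (1 : ℝ) else 0) *
        (if ω s(b, u) = true ∧ col s(b, u) = i then (1 : ℝ) else 0) =
        if ((ω s(a, u) = true ∧ col s(a, u) = i) ∧ (ω s(b, u) = true ∧ col s(b, u) = i))
          then 1 else 0 := by
      intro u
      split_ifs <;> simp_all
    simp_rw [h3]
    rw [Finset.sum_boole, ← Set.ncard_coe_finset]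
    congr 2
    ext u
    simp only [coloredNbhd, graphOf_adj, Finset.coe_filter, Finset.mem_compl, Set.mem_setOf_eq,
      Set.mem_compl_iff, Finset.mem_coe, Set.mem_inter_iff]
    constructor
    · rintro ⟨h1, ⟨h2, h3⟩, h4, h5⟩
      exact ⟨⟨h1, ⟨fun h => h1 (h ▸ haW), h2⟩, h3⟩, ⟨h1, ⟨fun h => h1 (h ▸ hbW), h4⟩, h5⟩⟩
    · tauto

end PartC

section PartD

lemma pair_disj {n : ℕ} (W : Finset (Fin n)) {a b : Fin n} (ha : a ∈ W) (hb : b ∈ W) :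
    ((Wᶜ : Finset (Fin n)) : Set (Fin n)).PairwiseDisjoint
      (fun u => ({s(a, u), s(b, u)} : Finset (Sym2 (Fin n)))) := by
  intro u hu v hv huv
  have hu' : u ∉ W := by simpa using hu
  have hv' : v ∉ W := by simpa using hv
  have key : ∀ c ∈ W, ∀ d ∈ W, s(c, u) ≠ s(d, v) := by
    intro c hc d hd h
    rw [Sym2.eq_iff] at h
    rcases h with ⟨_, h⟩ | ⟨h, _⟩
    · exact huv h
    · exact hv' (h ▸ hc)
  rw [Function.onFun, Finset.disjoint_left]
  intro e he he'
  simp only [Finset.mem_insert, Finset.mem_singleton] at he he'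
  rcases he with rfl | rfl <;> rcases he' with h | h
  · exact key _ ha _ ha h
  · exact key _ ha _ hb h
  · exact key _ hb _ ha h
  · exact key _ hb _ hb h

lemma bv_mul_self (b : Bool) : bv b * bv b = bv b := by
  cases b <;> simp [bv]

lemma bad1 {n : ℕ} (W : Finset (Fin n)) (p del : ℝ) (hp0 : 0 ≤ p) (hp1 : p ≤ 1)
    (hd0 : 0 < del) (hd1 : del ≤ 1) (hW : (W.card : ℝ) ≤ del / 4 * n) (a : Fin n) (ha : a ∈ W) :
    (gnp n p).real {ω | ¬ (1 - del) * n * p ≤ ∑ u ∈ Wᶜ, bv (ω s(a, u))} ≤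
      Real.exp (- (del ^ 2 / 8 * (n * p ^ 2))) := by
  have := gnp_prob (n := n) hp0 hp1
  have hc := chernoff (n := n) hp0 hp1 Wᶜ (fun u => ({s(a, u)} : Finset (Sym2 (Fin n))))
    (by simpa using pair_disj W ha ha) 1 (by simp) (- (del / 2))
    (by rw [abs_le]; constructor <;> linarith) ((1 - del) * n * p)
  refine (measureReal_mono ?_).trans (hc.trans ?_)
  · intro ω hω
    simp only [Set.mem_setOf_eq, not_le] at hω ⊢
    simp only [Finset.prod_singleton]
    nlinarith
  · apply Real.exp_le_exp.2
    have hN : (1 - del / 4) * n ≤ ((Wᶜ : Finset (Fin n)).card : ℝ) := by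
      have := Finset.card_add_card_compl W
      simp only [Fintype.card_fin] at this
      have h2 : (W.card : ℝ) + ((Wᶜ : Finset (Fin n)).card : ℝ) = n := by exact_mod_cast this
      linarith
    have hn0 : (0 : ℝ) ≤ n := by positivity
    have h1 : ((Wᶜ : Finset (Fin n)).card : ℝ) * (p * (del / 2 - del ^ 2 / 4)) ≥
        (1 - del / 4) * n * (p * (del / 2 - del ^ 2 / 4)) := by
      apply mul_le_mul_of_nonneg_right hN
      apply mul_nonneg hp0
      nlinarith
    have h2 : n * p ^ 2 ≤ n * p := by
      apply mul_le_mul_of_nonneg_left _ hn0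
      nlinarith
    have h3 : del ^ 2 * (n * p ^ 2) ≤ del ^ 2 * (n * p) := by gcongr
    have h4 : 0 ≤ del ^ 3 * (n * p) := by positivity
    nlinarith

lemma bad2 {n : ℕ} (W : Finset (Fin n)) (p del : ℝ) (hp0 : 0 ≤ p) (hp1 : p ≤ 1)
    (hd0 : 0 < del) (hd1 : del ≤ 1) (a b : Fin n) (ha : a ∈ W) (hb : b ∈ W) :
    (gnp n p).real {ω | ¬ ∑ u ∈ Wᶜ, bv (ω s(a, u)) * bv (ω s(b, u)) ≤
      (1 + del) * n * (if a = b then p else p ^ 2)} ≤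
      Real.exp (- (del ^ 2 / 8 * (n * p ^ 2))) := by
  have := gnp_prob (n := n) hp0 hp1
  have hprod : ∀ (ω : Sym2 (Fin n) → Bool), ∀ u ∈ Wᶜ, bv (ω s(a, u)) * bv (ω s(b, u)) =
      ∏ e ∈ ({s(a, u), s(b, u)} : Finset (Sym2 (Fin n))), bv (ω e) := by
    intro ω u hu
    by_cases hab : a = b
    · subst hab
      simp [bv_mul_self]
    · rw [Finset.prod_pair]
      intro h
      rw [Sym2.eq_iff] at h
      rcases h with ⟨h, _⟩ | ⟨h, h'⟩
      · exact hab h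
      · exact hab (h.trans h')
  have hc := chernoff (n := n) hp0 hp1 Wᶜ
    (fun u => ({s(a, u), s(b, u)} : Finset (Sym2 (Fin n))))
    (pair_disj W ha hb) (if a = b then 1 else 2) (by
      intro u hu
      split_ifs with hab
      · subst hab
        simp
      · rw [Finset.card_pair]
        intro h
        rw [Sym2.eq_iff] at h
        rcases h with ⟨h, _⟩ | ⟨h, h'⟩
        · exact hab h
        · exact hab (h.trans h')) (del / 2)
    (by rw [abs_le]; constructor <;> linarith) ((1 + del) * n * (if a = b then p else p ^ 2))
  have hq : p ^ (if a = b then 1 else 2) = (if a = b then p else p ^ 2) := by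
    split_ifs <;> simp
  rw [hq] at hc
  have hpq : p ^ 2 ≤ (if a = b then p else p ^ 2) := by
    split_ifs
    · nlinarith
    · exact le_rfl
  generalize (if a = b then p else p ^ 2) = q at *
  refine (measureReal_mono ?_).trans (hc.trans ?_)
  · intro ω hω
    simp only [Set.mem_setOf_eq, not_le] at hω ⊢
    rw [Finset.sum_congr rfl (hprod ω)] at hω
    nlinarith
  · apply Real.exp_le_exp.2
    have hN : ((Wᶜ : Finset (Fin n)).card : ℝ) ≤ n := by
      have := Finset.card_le_univ (Wᶜ : Finset (Fin n))
      simp only [Fintype.card_fin] at this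
      exact_mod_cast this
    have hn0 : (0 : ℝ) ≤ n := by positivity
    have hq0 : 0 ≤ q := (sq_nonneg p).trans hpq
    have h1 : ((Wᶜ : Finset (Fin n)).card : ℝ) * (q * (del / 2 + del ^ 2 / 4)) ≤
        n * (q * (del / 2 + del ^ 2 / 4)) := by
      apply mul_le_mul_of_nonneg_right hN
      positivity
    have h3 : del ^ 2 * (n * p ^ 2) ≤ del ^ 2 * (n * q) := by gcongr
    have h4 : 0 ≤ del ^ 2 * (n * q) := by positivity
    nlinarith

lemma good_prob {n : ℕ} (hn : 0 < n) (W : Finset (Fin n)) (p del : ℝ) (hp0 : 0 ≤ p) (hp1 : p ≤ 1)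
    (hd0 : 0 < del) (hd1 : del ≤ 1) (hW : (W.card : ℝ) ≤ del / 4 * n)
    (hlog : 3 * Real.log n ≤ del ^ 2 / 8 * (n * p ^ 2)) :
    1 - 2 / (n : ℝ) ≤ (gnp n p).real {ω | Good W p del ω} := by
  have := gnp_prob (n := n) hp0 hp1
  have hn0 : (0 : ℝ) < n := by exact_mod_cast hn
  set x := Real.exp (- (del ^ 2 / 8 * (n * p ^ 2))) with hx
  have hx0 : 0 ≤ x := (Real.exp_pos _).le
  have hx3 : x ≤ ((n : ℝ) ^ 3)⁻¹ := by
    rw [← Real.exp_log (show 0 < ((n : ℝ) ^ 3)⁻¹ by positivity), Real.log_inv, Real.log_pow, hx]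
    apply Real.exp_le_exp.2
    push_cast
    linarith
  have hWn : (W.card : ℝ) ≤ n := by nlinarith
  have hcompl : (gnp n p).real {ω | Good W p del ω}ᶜ ≤ 2 / n := by
    have hsub : {ω | Good W p del ω}ᶜ ⊆
        (⋃ a ∈ W, {ω | ¬ (1 - del) * n * p ≤ ∑ u ∈ Wᶜ, bv (ω s(a, u))}) ∪
        (⋃ a ∈ W, ⋃ b ∈ W, {ω | ¬ ∑ u ∈ Wᶜ, bv (ω s(a, u)) * bv (ω s(b, u)) ≤
          (1 + del) * n * (if a = b then p else p ^ 2)}) := by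
      intro ω hω
      simp only [Good, Set.mem_compl_iff, Set.mem_setOf_eq, not_and_or, not_forall] at hω
      simp only [Set.mem_union, Set.mem_iUnion, Set.mem_setOf_eq]
      exact hω
    refine (measureReal_mono hsub).trans ((measureReal_union_le _ _).trans ?_)
    have h1 : (gnp n p).real (⋃ a ∈ W, {ω | ¬ (1 - del) * n * p ≤ ∑ u ∈ Wᶜ, bv (ω s(a, u))}) ≤
        ∑ a ∈ W, x :=
      (measureReal_biUnion_finset_le _ _).trans
        (Finset.sum_le_sum fun a ha => bad1 W p del hp0 hp1 hd0 hd1 hW a ha)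
    have h2 : (gnp n p).real (⋃ a ∈ W, ⋃ b ∈ W,
        {ω | ¬ ∑ u ∈ Wᶜ, bv (ω s(a, u)) * bv (ω s(b, u)) ≤
          (1 + del) * n * (if a = b then p else p ^ 2)}) ≤ ∑ a ∈ W, ∑ b ∈ W, x :=
      (measureReal_biUnion_finset_le _ _).trans
        (Finset.sum_le_sum fun a ha => (measureReal_biUnion_finset_le _ _).trans
          (Finset.sum_le_sum fun b hb => bad2 W p del hp0 hp1 hd0 hd1 a b ha hb))
    refine (add_le_add h1 h2).trans ?_
    simp only [Finset.sum_const, nsmul_eq_mul]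
    have hn1 : (1 : ℝ) ≤ n := by exact_mod_cast hn
    have h3 : (W.card : ℝ) * x ≤ n * ((n : ℝ) ^ 3)⁻¹ := by gcongr
    have h4 : (W.card : ℝ) * (W.card * x) ≤ n * (n * ((n : ℝ) ^ 3)⁻¹) := by gcongr
    have h5 : n * (n * ((n : ℝ) ^ 3)⁻¹) = 1 / n := by field_simp
    have h6 : n * ((n : ℝ) ^ 3)⁻¹ ≤ n * (n * ((n : ℝ) ^ 3)⁻¹) := by
      gcongr
      exact le_mul_of_one_le_left (by positivity) hn1
    have h7 : 2 / (n : ℝ) = 1 / n + 1 / n := by ring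
    linarith
  rw [probReal_compl_eq_one_sub (Set.toFinite _).measurableSet] at hcompl
  linarith

end PartD

/-- Let `r ≥ 2`, `c = 384r`, `W = W(n) ⊆ [n]` fixed sets of at most
`n/(100r)^4` vertices, and `p = p(n) ≫ (log n/n)^{1/2}`. Then w.h.p. for every `r`-coloring of
the edges of `G ~ G(n,p)` and every associated majority-color partition of `W`, each auxiliary
graph `H_i` contains (at most) `3r - 1` vertex-disjoint cycles covering all but at most
`18 r² c / p + (3r)³` vertices of `H_i`. -/
theorem stmt11 (r : ℕ) (hr : 2 ≤ r) (c : ℝ) (hc : c = 384 * r)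
    (W : (n : ℕ) → Finset (Fin n))
    (hW : ∀ n : ℕ, ((W n).card : ℝ) ≤ (n : ℝ) / (100 * r : ℝ) ^ 4)
    (p : ℕ → ℝ) (hp0 : ∀ n, 0 ≤ p n) (hp1 : ∀ n, p n ≤ 1)
    (hpgg : Tendsto (fun n : ℕ => p n / Real.sqrt (Real.log n / n)) atTop atTop) :
    Tendsto (fun n => gnp n (p n)
      {ω | ∀ (col : Sym2 (Fin n) → Fin r) (f : Fin n → Fin r),
        IsMajorityPartition (graphOf ω) col (W n) f →
        ∀ i : Fin r,
          ∃ 𝒞 : Finset (Set (Fin n)),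
            𝒞.card ≤ 3 * r - 1 ∧
            (𝒞 : Set (Set (Fin n))).Pairwise Disjoint ∧
            (∀ S ∈ 𝒞,
              IsCycleSet (auxGraph (graphOf ω) col (W n) f i
                ((n : ℝ) * p n ^ 2 / (50 * r : ℝ) ^ 4)) S ∧
              S ⊆ {v | v ∈ W n ∧ f v = i}) ∧
            ((({v | v ∈ W n ∧ f v = i} \ ⋃₀ (𝒞 : Set (Set (Fin n)))).ncard : ℝ) ≤
              18 * r ^ 2 * c / p n + (3 * r : ℝ) ^ 3)})
      atTop (nhds 1) := by
  have hr2 : (2 : ℝ) ≤ r := by exact_mod_cast hr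
  have hr0 : (0 : ℝ) < r := by linarith
  set del : ℝ := 1 / (20 * r) with hdel
  have hd0 : 0 < del := by positivity
  have hd1 : del ≤ 1 := by
    rw [hdel, div_le_one (by positivity)]
    linarith
  have hev : ∀ᶠ n : ℕ in atTop, 2 ≤ n ∧ 24 / del ^ 2 + 1 ≤ p n / Real.sqrt (Real.log n / n) :=
    (eventually_ge_atTop 2).and (hpgg.eventually_ge_atTop _)
  have hlim : Tendsto (fun n : ℕ => ENNReal.ofReal (1 - 2 / (n : ℝ))) atTop (nhds 1) := by
    have h1 : Tendsto (fun n : ℕ => 1 - 2 / (n : ℝ)) atTop (nhds (1 - 0)) :=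
      tendsto_const_nhds.sub (tendsto_const_div_atTop_nhds_zero_nat 2)
    simpa using ENNReal.tendsto_ofReal h1
  refine tendsto_of_tendsto_of_tendsto_of_le_of_le' hlim tendsto_const_nhds ?_
    (Eventually.of_forall fun n => ?_)
  swap
  · have := gnp_prob (n := n) (hp0 n) (hp1 n)
    exact prob_le_one
  filter_upwards [hev] with n hn
  obtain ⟨hn2, hK⟩ := hn
  have := gnp_prob (n := n) (hp0 n) (hp1 n)
  have hnR : (2 : ℝ) ≤ n := by exact_mod_cast hn2
  have hlogpos : 0 < Real.log n := Real.log_pos (by linarith)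
  have hq : 0 < Real.log n / n := by positivity
  have hsq : 0 < Real.sqrt (Real.log n / n) := Real.sqrt_pos.2 hq
  rw [le_div_iff₀ hsq] at hK
  set K := 24 / del ^ 2 with hKdef
  have hK0 : 0 < K := by positivity
  have hp : 0 < p n := lt_of_lt_of_le (by positivity) hK
  have hnp : K * Real.log n ≤ n * p n ^ 2 := by
    have h1 : ((K + 1) * Real.sqrt (Real.log n / n)) ^ 2 ≤ p n ^ 2 := by gcongr
    rw [mul_pow, Real.sq_sqrt hq.le] at h1
    have h2 : n * ((K + 1) ^ 2 * (Real.log n / n)) ≤ n * p n ^ 2 := by gcongr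
    have h3 : n * ((K + 1) ^ 2 * (Real.log n / n)) = (K + 1) ^ 2 * Real.log n := by field_simp
    have h4 : K * Real.log n ≤ (K + 1) ^ 2 * Real.log n := by
      apply mul_le_mul_of_nonneg_right _ hlogpos.le
      nlinarith
    linarith
  have hlog : 3 * Real.log n ≤ del ^ 2 / 8 * (n * p n ^ 2) := by
    have h1 : del ^ 2 / 8 * (K * Real.log n) ≤ del ^ 2 / 8 * (n * p n ^ 2) := by gcongr
    have h2 : del ^ 2 / 8 * (K * Real.log n) = 3 * Real.log n := by
      rw [hKdef]
      field_simp
      norm_num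
    linarith
  have hWn : ((W n).card : ℝ) ≤ del / 4 * n := by
    refine (hW n).trans ?_
    rw [hdel, div_le_iff₀ (by positivity)]
    have h1 : (1 : ℝ) ≤ 1 / (20 * r) / 4 * (100 * r) ^ 4 := by
      rw [div_div, div_mul_eq_mul_div, one_mul, le_div_iff₀ (by positivity)]
      have : (1 : ℝ) ≤ r ^ 3 := one_le_pow₀ (by linarith)
      nlinarith
    nlinarith
  have hgood := good_prob (by omega) (W n) (p n) del (hp0 n) (hp1 n) hd0 hd1 hWn hlog
  refine (ENNReal.ofReal_le_ofReal hgood).trans ?_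
  rw [ofReal_measureReal]
  refine measure_mono ?_
  intro ω hω col f hf i
  have hG : Good (W n) (p n) del ω := hω
  set s := ⌈c / p n⌉₊ with hs
  have hs1 : c / p n ≤ s := Nat.le_ceil _
  have hc0 : 0 ≤ c := by rw [hc]; positivity
  have hs2 : (s : ℝ) ≤ c / p n + 1 := (Nat.ceil_lt_add_one (by positivity)).le
  have hsp : 384 * (r : ℝ) ≤ s * p n := by
    rw [← hc]
    rwa [div_le_iff₀ hp] at hs1
  have hQ := good_qprop hr (by omega) (W n) (p n) del hp hdel ω hG s hsp col f hf i (3 * r - 1)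
    (by omega)
  obtain ⟨C, L, h1, h2, h3, h4, h5⟩ := cover _ s _ _ hQ
  have hset : (((W n).filter (fun v => f v = i) : Finset (Fin n)) : Set (Fin n)) =
      {v | v ∈ W n ∧ f v = i} := by
    ext v
    simp
  refine ⟨C, h1, h2, fun S hS => ⟨(h3 S hS).1, hset ▸ (h3 S hS).2⟩, ?_⟩
  have hsub : {v | v ∈ W n ∧ f v = i} \ ⋃₀ (C : Set (Set (Fin n))) ⊆ (L : Set (Fin n)) := by
    rintro v ⟨hv, hvC⟩
    rcases h5 v (by simpa using hv) with h | ⟨S, hS, hvS⟩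
    · exact h
    · exact absurd ⟨S, hS, hvS⟩ hvC
  have hcard := Set.ncard_le_ncard hsub (Finset.finite_toSet L)
  rw [Set.ncard_coe_finset] at hcard
  have hcard2 : ({v | v ∈ W n ∧ f v = i} \ ⋃₀ (C : Set (Set (Fin n)))).ncard ≤ 6 * r * s :=
    hcard.trans (h4.trans (Nat.mul_le_mul_right _ (by omega)))
  have hcard3 : (({v | v ∈ W n ∧ f v = i} \ ⋃₀ (C : Set (Set (Fin n)))).ncard : ℝ) ≤
      6 * r * s := by exact_mod_cast hcard2
  refine hcard3.trans ?_
  have h6 : 6 * (r : ℝ) * s ≤ 6 * r * (c / p n + 1) := by gcongr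
  have h7 : 6 * (r : ℝ) * (c / p n) ≤ 18 * r ^ 2 * (c / p n) := by
    apply mul_le_mul_of_nonneg_right _ (by positivity)
    nlinarith
  have h8 : 6 * (r : ℝ) ≤ (3 * r) ^ 3 := by nlinarith [sq_nonneg (r : ℝ), mul_pos hr0 hr0, mul_pos (mul_pos hr0 hr0) hr0]
  rw [mul_div_assoc]
  linarith
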